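/- There is an absolute constant c > 0 such that the following holds for all sufficiently large integers n. Consider λ > 0 and integers L and R satisfying (log n)/20 < L < L² < R < (n − 5L² − 3L)/9, and let n' = n − 8R − 5L² − 3L and λ' = λ/2^{R−L}. Condition on an outcome of M_{n'} for which there is a subset B ⊆ {1,…,n'} of size n' − R such that M_{n'}[{R+1,…,n'}, B] is λ-heavy. Then with probability at least 1 − (1/8)·n^{−c}, there is a set B' of size n − L with {1,…,n−3L} ⊆ B' ⊆ {1,…,n} such that M_n[{L+1,…,n}, B'] is λ'-heavy. -/

import Mathlib

/-!
The rows and columns `n', …, n - 1` of the symmetric matrix are exposed one at a time. At time `m`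
we look for a set `B ⊆ {0, …, m - 1}` of `m - s` columns whose permanent with the rows
`s, …, m - 1` is heavy; `s` is the deficit. Write `x` for the random sign vector forming the new row
and column, `A` for the current rows, and `P` for the current permanent.

* Keeping the deficit. Adding the new row and a missing column `b` gives the permanent
  `x_b P + (a function of x on B)`. Once `x` is fixed on `B`, the signs `x_b` of the `s` missing
  columns are independent, so all these permanents are small with probability at most `2^(-s)`.

* Lowering the deficit. Adding the new row and column together with one more row `a` and one more
  column `b` gives a quadratic form in `x`, which is at least as large as its coefficient of
  `x_a x_b` with probability at least `1/4`. By symmetry this coefficient is `P + Q_b`, where `Q_b`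
  is the permanent on `A ∪ {a} \ {b}` and `B ∪ {b} \ {a}` (or `0` if this makes no sense). If
  `|P + Q_b|` is less than `|P| / 2` for two missing columns `b₁`, `b₂`, then `Q_{b₁} + Q_{b₂}`,
  which is close to `-2P`, is large, and it is the coefficient of `x_{b₁} x_{b₂}` for the rows
  `A ∪ {a}` and the columns `B ∪ {b₁, b₂} \ {a}`. Thus the deficit drops with probability at least
  `1/4` while a factor two is lost.

* Three phases. In `8R` steps the deficit is lowered from `R` to `L²`, in `5L²` steps from `L²` to
  `L`, and in the last `3L` steps the missing columns below `n - 3L` are added one by one. A phase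
  fails if some step is lost, which costs at most `2^(-L²)` per step in the first phase and `2^(-L)`
  per step afterwards, or if there are too few successful steps, which an exponential potential
  shows to be exponentially unlikely.
-/

open Finset

/-- The real number (`1` or `-1`) associated to a Boolean: a Rademacher value. -/
noncomputable def rad (b : Bool) : ℝ := if b then 1 else -1

/-- The permanent of the submatrix of `M` with row set `A` and column set `B`,
defined as a sum over all bijections between `A` and `B` (it equals `0` if
`A.card ≠ B.card`). Since the permanent is invariant under row and column
permutations, this faithfully represents `per M[A,B]`. -/
noncomputable def permOn {m n : ℕ} (M : Matrix (Fin m) (Fin n) ℝ)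
    (A : Finset (Fin m)) (B : Finset (Fin n)) : ℝ :=
  ∑ σ : {x // x ∈ A} ≃ {y // y ∈ B}, ∏ i : {x // x ∈ A}, M i.1 (σ i).1

/-- The random symmetric extension of a fixed `n' × n'` matrix `M` to an `n × n` matrix:
the top-left `n' × n'` block is `M`, and the remaining entries are Rademacher values
determined symmetrically by the Boolean data `ω`. As `ω` ranges uniformly over all Boolean
data, the new entries (on and above the diagonal) are i.i.d. Rademacher random variables. -/
noncomputable def extSym {n' : ℕ} (n : ℕ) (M : Matrix (Fin n') (Fin n') ℝ)
    (ω : Fin n → Fin n → Bool) : Matrix (Fin n) (Fin n) ℝ :=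
  fun i j =>
    if h : (i : ℕ) < n' ∧ (j : ℕ) < n' then M ⟨i, h.1⟩ ⟨j, h.2⟩
    else if i ≤ j then rad (ω i j) else rad (ω j i)

open Classical in
/-- The probability of the event `P` for the random symmetric extension of `M` to size `n`
(i.e. conditionally on the outcome `M` for the top-left block). -/
noncomputable def probExt {n' : ℕ} (n : ℕ) (M : Matrix (Fin n') (Fin n') ℝ)
    (P : Matrix (Fin n) (Fin n) ℝ → Prop) : ℝ :=
  ((univ.filter fun ω : Fin n → Fin n → Bool => P (extSym n M ω)).card : ℝ) / 2 ^ (n * n)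

open Matrix
open scoped BigOperators

section Permanent

variable {m n m' n' : ℕ} {M M' : Matrix (Fin m) (Fin n) ℝ}
  {A : Finset (Fin m)} {B : Finset (Fin n)}

theorem permOn_congr (h : ∀ i ∈ A, ∀ j ∈ B, M i j = M' i j) : permOn M A B = permOn M' A B :=
  Fintype.sum_congr _ _ fun σ => Fintype.prod_congr _ _ fun i => h i i.2 (σ i) (σ i).2

theorem permOn_transpose (M : Matrix (Fin m) (Fin n) ℝ) (A : Finset (Fin m))
    (B : Finset (Fin n)) : permOn M.transpose B A = permOn M A B := by
  refine Fintype.sum_equiv ⟨Equiv.symm, Equiv.symm, fun _ => rfl, fun _ => rfl⟩ _ _ fun σ => ?_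
  exact Fintype.prod_equiv σ _ _ fun i => by simp

theorem permOn_map (M : Matrix (Fin m') (Fin n') ℝ) (e : Fin m ↪ Fin m') (f : Fin n ↪ Fin n')
    (A : Finset (Fin m)) (B : Finset (Fin n)) :
    permOn M (A.map e) (B.map f) = permOn (M.submatrix e f) A B := by
  refine (Fintype.sum_equiv (Equiv.equivCongr (A.equivMap e) (B.equivMap f)) _ _ fun σ => ?_).symm
  refine Fintype.prod_equiv (A.equivMap e) _ _ fun i => ?_
  rw [Equiv.equivCongr_apply_apply, Equiv.symm_apply_apply]
  rfl

theorem sum_option_equiv {α β N : Type*} [Fintype α] [Fintype β] [DecidableEq α] [DecidableEq β]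
    [AddCommMonoid N] (F : Option α ≃ β → N) :
    ∑ σ, F σ = ∑ j : β, ∑ τ : α ≃ {y // y ≠ j}, F ((Equiv.optionSubtype j).symm τ).1 := by
  rw [← Fintype.sum_fiberwise (fun σ : Option α ≃ β => σ none)]
  exact Fintype.sum_congr _ _ fun j =>
    ((Equiv.optionSubtype j).symm.sum_comp fun σ : {σ : Option α ≃ β // σ none = j} => F σ.1).symm

theorem permOn_insert_row (M : Matrix (Fin m) (Fin n) ℝ) {r : Fin m} (hr : r ∉ A)
    (B : Finset (Fin n)) :
    permOn M (insert r A) B = ∑ j ∈ B, M r j * permOn M A (B.erase j) := by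
  let e : {x // x ∈ insert r A} ≃ Option {x // x ∈ A} := subtypeInsertEquivOption hr
  have sum_over_option : permOn M (insert r A) B =
      ∑ σ : Option {x // x ∈ A} ≃ {y // y ∈ B}, M r (σ none) * ∏ i, M i.1 (σ (some i)) := by
    refine Fintype.sum_equiv (Equiv.equivCongr e (Equiv.refl _)) _ _ fun σ => ?_
    rw [← Equiv.prod_comp e.symm, Fintype.prod_option]
    rfl
  let f (j : {y // y ∈ B}) : {y // y ≠ j} ≃ {y // y ∈ B.erase j.1} :=
    { toFun y := ⟨y, mem_erase.2 ⟨Subtype.coe_ne_coe.2 y.2, y.1.2⟩⟩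
      invFun y :=
        ⟨⟨y, mem_of_mem_erase y.2⟩, Subtype.coe_ne_coe.1 (ne_of_mem_erase y.2)⟩ }
  rw [sum_over_option, sum_option_equiv, ← sum_coe_sort B]
  refine Fintype.sum_congr _ _ fun j => ?_
  rw [permOn, mul_sum]
  refine Fintype.sum_equiv (Equiv.equivCongr (Equiv.refl _) (f j)) _ _ fun τ => ?_
  simp [Equiv.equivCongr, f]

theorem permOn_insert_col (M : Matrix (Fin m) (Fin n) ℝ) (A : Finset (Fin m)) {c : Fin n}
    (hc : c ∉ B) : permOn M A (insert c B) = ∑ i ∈ A, M i c * permOn M (A.erase i) B := by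
  rw [← permOn_transpose, permOn_insert_row _ hc]
  simp only [permOn_transpose, Matrix.transpose_apply]

/-- The matrix of permanental cofactors of `M[A, B]`: its entry at `(i, j) ∈ A × B` is the permanent
of the complementary minor, and its entries outside `A × B` are `0`. -/
noncomputable def permCofactor (M : Matrix (Fin m) (Fin n) ℝ) (A : Finset (Fin m))
    (B : Finset (Fin n)) : Matrix (Fin m) (Fin n) ℝ :=
  fun i j => if i ∈ A ∧ j ∈ B then permOn M (A.erase i) (B.erase j) else 0

theorem permCofactor_congr (h : ∀ i ∈ A, ∀ j ∈ B, M i j = M' i j) :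
    permCofactor M A B = permCofactor M' A B := by
  funext i j
  refine if_congr Iff.rfl (permOn_congr fun i' hi' j' hj' => ?_) rfl
  exact h i' (mem_of_mem_erase hi') j' (mem_of_mem_erase hj')

theorem permOn_insert_insert (M : Matrix (Fin m) (Fin n) ℝ) {r : Fin m} {c : Fin n} (hr : r ∉ A)
    (hc : c ∉ B) :
    permOn M (insert r A) (insert c B) =
      M r c * permOn M A B + M.col c ⬝ᵥ permCofactor M A B *ᵥ M.row r := by
  have sum_cofactor : M.col c ⬝ᵥ permCofactor M A B *ᵥ M.row r =
      ∑ j ∈ B, M r j * ∑ i ∈ A, M i c * permOn M (A.erase i) (B.erase j) := by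
    simp only [dotProduct, Matrix.mulVec, permCofactor, Matrix.col_apply, Matrix.row_apply, mul_sum]
    rw [sum_comm]
    simp [ite_and, sum_ite_irrel, mul_comm, mul_left_comm]
  rw [permOn_insert_row _ hr, sum_insert hc, erase_insert hc, sum_cofactor]
  congr 1
  refine sum_congr rfl fun j hj => ?_
  rw [erase_insert_of_ne (ne_of_mem_of_not_mem hj hc).symm,
    permOn_insert_col _ _ fun h => hc (mem_of_mem_erase h)]

end Permanent

section Probability

variable {α β ι : Type*} [Fintype α]

open Classical in
/-- The probability of the event `P` for a uniformly random element of `α`. -/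
noncomputable def prob (P : α → Prop) : ℝ := 𝔼 x, if P x then 1 else 0

open Classical in
theorem prob_eq_card_div_card (P : α → Prop) :
    prob P = #{x | P x} / Fintype.card α := by
  simp [prob, Fintype.expect_eq_sum_div_card]

theorem prob_mono {P Q : α → Prop} (h : ∀ x, P x → Q x) : prob P ≤ prob Q := by
  classical
  exact expect_le_expect fun x _ => by
    by_cases hP : P x
    · simp [hP, h x hP]
    · split_ifs <;> norm_num

theorem prob_or_le (P Q : α → Prop) : prob (fun x => P x ∨ Q x) ≤ prob P + prob Q := by
  classical
  rw [prob, prob, prob, ← expect_add_distrib]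
  exact expect_le_expect fun x _ => by by_cases hP : P x <;> by_cases hQ : Q x <;> simp [hP, hQ]

theorem prob_not [Nonempty α] (P : α → Prop) : prob (fun x => ¬P x) = 1 - prob P := by
  classical
  have h : prob (fun x => ¬P x) + prob P = 1 := by
    rw [prob, prob, ← expect_add_distrib, ← Fintype.expect_const (ι := α) (1 : ℝ)]
    exact expect_congr rfl fun x _ => by by_cases hP : P x <;> simp [hP]
  linarith

theorem prob_eq_one [Nonempty α] {P : α → Prop} (h : ∀ x, P x) : prob P = 1 := by
  simp [prob, h]

theorem prob_comp_equiv [Fintype β] (e : α ≃ β) (P : β → Prop) :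
    prob (fun x => P (e x)) = prob P :=
  Fintype.expect_equiv e _ _ fun _ => rfl

theorem prob_le_inv_card_pow [Fintype ι] [DecidableEq ι] [Nonempty α] {P : (ι → α) → Prop}
    {T : Finset ι} (hP : ∀ x y, P x → P y → (∀ i ∉ T, x i = y i) → x = y) :
    prob P ≤ (Fintype.card α : ℝ)⁻¹ ^ #T := by
  classical
  have card_le : #{x | P x} ≤ Fintype.card α ^ (Fintype.card ι - #T) := by
    rw [← card_compl, ← Fintype.card_coe Tᶜ, ← Fintype.card_fun, ← card_univ]
    refine card_le_card_of_injOn (fun x (i : {i // i ∈ Tᶜ}) => x i) (fun _ _ => mem_univ _) ?_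
    intro x hx y hy hxy
    exact hP x y (by simpa using hx) (by simpa using hy) fun i hi =>
      congrFun hxy ⟨i, mem_compl.2 hi⟩
  have card_ne_zero : (Fintype.card α : ℝ) ≠ 0 := Nat.cast_ne_zero.2 Fintype.card_ne_zero
  rw [prob_eq_card_div_card, Fintype.card_fun, Nat.cast_pow]
  calc (#{x | P x} : ℝ) / Fintype.card α ^ Fintype.card ι
      ≤ Fintype.card α ^ (Fintype.card ι - #T) / Fintype.card α ^ Fintype.card ι := by
        gcongr; exact_mod_cast card_le
    _ = (Fintype.card α : ℝ)⁻¹ ^ #T := by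
        rw [pow_sub₀ _ card_ne_zero (card_le_univ T), inv_pow]
        field_simp

theorem one_fourth_le_prob_of_second_difference [Nonempty α] {f : α → ℝ} {μ : ℝ}
    (σ τ : Equiv.Perm α) (h : ∀ x, 4 * μ ≤ |f x - f (σ x) - f (τ x) + f (σ (τ x))|) :
    1 / 4 ≤ prob fun x => μ ≤ |f x| := by
  let P (x : α) : Prop := μ ≤ |f x|
  have some_large (x : α) : (P x ∨ P (σ x)) ∨ P (τ x) ∨ P (σ (τ x)) := by
    by_contra! hsmall
    simp only [P, not_le] at hsmall
    have h₁ := abs_add_le (f x - f (σ x) - f (τ x)) (f (σ (τ x)))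
    have h₂ := abs_sub (f x - f (σ x)) (f (τ x))
    have h₃ := abs_sub (f x) (f (σ x))
    linarith [h x]
  have sum_eq : (prob P + prob fun x => P (σ x)) +
      ((prob fun x => P (τ x)) + prob fun x => P (σ (τ x))) = 4 * prob P := by
    rw [prob_comp_equiv σ P, prob_comp_equiv τ P, prob_comp_equiv τ fun x => P (σ x),
      prob_comp_equiv σ P]
    ring
  have one_le := (prob_eq_one some_large).ge.trans <| (prob_or_le _ _).trans <|
    add_le_add (prob_or_le P fun x => P (σ x)) (prob_or_le (fun x => P (τ x)) _)
  linarith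

end Probability

section Rademacher

theorem abs_rad (b : Bool) : |rad b| = 1 := by cases b <;> simp [rad]

theorem rad_not (b : Bool) : rad (!b) = -rad b := by cases b <;> simp [rad]

theorem rad_eq_neg_of_ne {b c : Bool} (h : b ≠ c) : rad b = -rad c := by
  rw [← rad_not, Bool.eq_not.2 h]

variable {ι : Type*} [DecidableEq ι]

/-- The measure-preserving map flipping one coordinate of a random Boolean vector. -/
def flipAt (p : ι) : Equiv.Perm (ι → Bool) :=
  Function.Involutive.toPerm (fun x => Function.update x p !x p) fun x => by simp

theorem flipAt_apply_self (p : ι) (x : ι → Bool) : flipAt p x p = !x p :=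
  Function.update_self ..

theorem flipAt_apply_of_ne {p i : ι} (h : i ≠ p) (x : ι → Bool) : flipAt p x i = x i :=
  Function.update_of_ne h ..

theorem rad_comp_flipAt (p : ι) (x : ι → Bool) :
    rad ∘ flipAt p x = rad ∘ x - Pi.single p (2 * rad (x p)) := by
  funext i
  obtain rfl | hi := eq_or_ne i p
  · simp [flipAt_apply_self, rad_not, two_mul]
  · simp [flipAt_apply_of_ne, hi]

variable [Fintype ι]

theorem prob_forall_abs_rad_mul_add_lt {T : Finset ι} {c μ : ℝ} {g : ι → (ι → Bool) → ℝ}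
    (hc : μ ≤ |c|) (hg : ∀ b ∈ T, ∀ x y, (∀ i ∉ T, x i = y i) → g b x = g b y) :
    prob (fun x : ι → Bool => ∀ b ∈ T, |rad (x b) * c + g b x| < μ) ≤ (1 / 2) ^ #T := by
  refine (prob_le_inv_card_pow (T := T) fun x y hx hy hxy => ?_).trans_eq (by simp)
  funext b
  by_cases hb : b ∈ T
  · by_contra hne
    have hx := abs_lt.1 (hx b hb)
    have hy := abs_lt.1 (hy b hb)
    rw [rad_eq_neg_of_ne hne, hg b hb x y hxy] at hx
    have : |rad (y b) * c| < μ := abs_lt.2 ⟨by linarith, by linarith⟩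
    rw [abs_mul, abs_rad, one_mul] at this
    exact this.not_ge hc
  · exact hxy b hb

theorem one_fourth_le_prob_le_abs_quadratic (l : ι → ℝ) {C : Matrix ι ι ℝ} {p q : ι} {μ : ℝ}
    (hpq : p ≠ q) (hC : μ ≤ |C p q + C q p|) :
    1 / 4 ≤ prob fun x : ι → Bool =>
      μ ≤ |l ⬝ᵥ (rad ∘ x) + (rad ∘ x) ⬝ᵥ C *ᵥ (rad ∘ x)| := by
  refine one_fourth_le_prob_of_second_difference (flipAt p) (flipAt q) fun x => ?_
  have flip_q_apply : flipAt q x p = x p := flipAt_apply_of_ne hpq x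
  have second_difference (v : ι → ℝ) (a b : ℝ) :
      let f (v : ι → ℝ) : ℝ := l ⬝ᵥ v + v ⬝ᵥ C *ᵥ v
      f v - f (v - Pi.single p a) - f (v - Pi.single q b) + f (v - Pi.single q b - Pi.single p a)
        = a * b * (C p q + C q p) := by
    simp only [mulVec_sub, dotProduct_sub, sub_dotProduct, single_dotProduct, mulVec_single,
      dotProduct_single, Pi.smul_apply, MulOpposite.smul_eq_mul_unop, Matrix.col_apply,
      MulOpposite.unop_op]
    ring
  have h := second_difference (rad ∘ x) (2 * rad (x p)) (2 * rad (x q))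
  simp only [rad_comp_flipAt, flip_q_apply] at h ⊢
  rw [h, abs_mul, abs_mul, abs_mul, abs_mul, abs_rad, abs_rad]
  norm_num
  linarith

end Rademacher

section MarkovChain

variable {S α : Type*} [Fintype α] {step : ℕ → S → α → S}

open Classical in
/-- The probability that the event `Q` fails after `t` steps of the Markov chain which starts at
time `m` in the state `s` and moves, at each time `i`, from a state `s'` to `step i s' x` with `x`
uniformly random. -/
noncomputable def failProb (step : ℕ → S → α → S) (Q : S → Prop) : ℕ → ℕ → S → ℝ
  | 0, _, s => if Q s then 0 else 1
  | t + 1, m, s => 𝔼 x, failProb step Q t (m + 1) (step m s x)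

/-- The chain started at time `m` in any state satisfying `P` satisfies `Q` at time `m + t`, except
with probability at most `δ`: a probabilistic Hoare triple. -/
def LeadsTo (step : ℕ → S → α → S) (m t : ℕ) (P Q : S → Prop) (δ : ℝ) : Prop :=
  ∀ s, P s → failProb step Q t m s ≤ δ

theorem leadsTo_zero (m : ℕ) (P : S → Prop) : LeadsTo step m 0 P P 0 := fun s hs => by
  simp [failProb, hs]

theorem leadsTo_one_iff {m : ℕ} {P Q : S → Prop} {δ : ℝ} :
    LeadsTo step m 1 P Q δ ↔ ∀ s, P s → prob (fun x => ¬Q (step m s x)) ≤ δ := by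
  have failProb_one (s : S) : failProb step Q 1 m s = prob fun x => ¬Q (step m s x) :=
    expect_congr rfl fun x _ => by by_cases h : Q (step m s x) <;> simp [failProb, h]
  simp only [LeadsTo, failProb_one]

theorem LeadsTo.mono {m t : ℕ} {P Q : S → Prop} {δ δ' : ℝ} (h : LeadsTo step m t P Q δ)
    (hδ : δ ≤ δ') : LeadsTo step m t P Q δ' :=
  fun s hs => (h s hs).trans hδ

theorem failProb_le_one (Q : S → Prop) (t m : ℕ) (s : S) : failProb step Q t m s ≤ 1 := by
  induction t generalizing m s with
  | zero => rw [failProb]; split_ifs <;> norm_num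
  | succ t ih =>
    cases isEmpty_or_nonempty α
    · simp [failProb]
    · exact (expect_le_expect fun x _ => ih (m + 1) (step m s x)).trans_eq (Fintype.expect_const 1)

open Classical in
theorem LeadsTo.failProb_le {m t : ℕ} {P Q : S → Prop} {δ : ℝ} (h : LeadsTo step m t P Q δ)
    (hδ : 0 ≤ δ) (s : S) : failProb step Q t m s ≤ δ + if P s then 0 else 1 := by
  split_ifs with hs
  · simpa using h s hs
  · linarith [failProb_le_one (step := step) Q t m s]

theorem failProb_add_le [Nonempty α] {m t u : ℕ} {P Q : S → Prop} {δ : ℝ} (hδ : 0 ≤ δ)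
    (h : LeadsTo step (m + t) u P Q δ) (s : S) :
    failProb step Q (t + u) m s ≤ failProb step P t m s + δ := by
  induction t generalizing m s with
  | zero => simpa [failProb, add_comm] using h.failProb_le hδ s
  | succ t ih =>
    rw [Nat.succ_add, failProb, failProb, ← Fintype.expect_const (ι := α) δ, ← expect_add_distrib]
    exact expect_le_expect fun x _ => ih (by rwa [add_right_comm, add_assoc]) _

theorem LeadsTo.trans [Nonempty α] {m t u : ℕ} {P Q R : S → Prop} {δ ε : ℝ}
    (hPQ : LeadsTo step m t P Q δ) (hQR : LeadsTo step (m + t) u Q R ε) (hε : 0 ≤ ε) :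
    LeadsTo step m (t + u) P R (δ + ε) :=
  fun s hs => (failProb_add_le hε hQR s).trans (by gcongr; exact hPQ s hs)

theorem leadsTo_of_forall_step [Nonempty α] {P : ℕ → S → Prop} {ε : ℝ} (hε : 0 ≤ ε) {m t : ℕ}
    (h : ∀ i, m ≤ i → i < m + t → LeadsTo step i 1 (P i) (P (i + 1)) ε) :
    LeadsTo step m t (P m) (P (m + t)) (t * ε) := by
  induction t with
  | zero => simpa using leadsTo_zero m (P m)
  | succ t ih =>
    have last := h (m + t) (by omega) (by omega)
    have first := ih fun i hi hit => h i hi (by omega)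
    exact (first.trans last hε).mono (by push_cast; linarith)

theorem expect_le_of_two_events [Nonempty α] {f : α → ℝ} {P Q : α → Prop} {u v : ℝ} (hu : 0 ≤ u)
    (huv : u ≤ v) (hf : ∀ x, f x ≤ 1) (hP : ∀ x, P x → f x ≤ u) (hQ : ∀ x, Q x → f x ≤ v) :
    𝔼 x, f x ≤ u + (v - u) * prob (fun x => ¬P x) + prob fun x => ¬Q x := by
  classical
  rw [prob, prob, mul_expect, ← Fintype.expect_const (ι := α) u, ← expect_add_distrib,
    ← expect_add_distrib, Fintype.expect_const]
  refine expect_le_expect fun x _ => ?_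
  by_cases hPx : P x
  · split_ifs <;> linarith [hP x hPx]
  · by_cases hQx : Q x
    · simpa [hPx, hQx] using hQ x hQx
    · simp only [hPx, hQx, not_false_eq_true, if_true, mul_one]
      linarith [hf x]

/- The potential `b ^ k` of the level `k` is multiplied by at most `p + (1 - p) / b` on average in a
step, up to the probability `ε` that the step is lost. -/
theorem leadsTo_level_zero [Nonempty α] {Good : ℕ → ℕ → S → Prop} {ε b p : ℝ} (hε : 0 ≤ ε)
    (hb : 1 ≤ b) (hp : 0 ≤ p) (hp' : p ≤ 1) {m t : ℕ}
    (stay : ∀ i, m ≤ i → i < m + t → ∀ k, LeadsTo step i 1 (Good i k) (Good (i + 1) k) ε)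
    (descend : ∀ i, m ≤ i → i < m + t → ∀ k,
      LeadsTo step i 1 (Good i (k + 1)) (Good (i + 1) k) p) (k : ℕ) :
    LeadsTo step m t (Good m k) (Good (m + t) 0) (t * ε + b ^ k * (p + (1 - p) / b) ^ t) := by
  classical
  set r := p + (1 - p) / b with hr
  have : 0 ≤ 1 - p := sub_nonneg.2 hp'
  have : 0 ≤ r := by positivity
  induction t generalizing m k with
  | zero => exact fun s _ => (failProb_le_one ..).trans (by simpa using one_le_pow₀ hb)
  | succ t ih =>
    cases k with
    | zero =>
      exact (leadsTo_of_forall_step hε fun i hi hit => stay i hi hit 0).mono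
        (le_add_of_nonneg_right (by positivity))
    | succ k =>
      intro s hs
      have hstay := leadsTo_one_iff.1 (stay m le_rfl (by omega) (k + 1)) s hs
      have hdescend := leadsTo_one_iff.1 (descend m le_rfl (by omega) k) s hs
      have rest (l : ℕ) (s' : S) (hs' : Good (m + 1) l s') :
          failProb step (Good (m + (t + 1)) 0) t (m + 1) s' ≤ t * ε + b ^ l * r ^ t := by
        rw [← add_assoc, add_right_comm]
        exact ih (fun i hi hit => stay i (by omega) (by omega))
          (fun i hi hit => descend i (by omega) (by omega)) l s' hs'
      have mean := expect_le_of_two_events (v := t * ε + b ^ (k + 1) * r ^ t) (by positivity)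
        (by gcongr; omega) (fun x => failProb_le_one (step := step) _ t (m + 1) (step m s x))
        (fun x => rest k _) (fun x => rest (k + 1) _)
      have gap_nonneg : 0 ≤ t * ε + b ^ (k + 1) * r ^ t - (t * ε + b ^ k * r ^ t) := by
        rw [sub_nonneg]; gcongr; omega
      calc failProb step (Good (m + (t + 1)) 0) (t + 1) m s
          ≤ t * ε + b ^ k * r ^ t +
              (t * ε + b ^ (k + 1) * r ^ t - (t * ε + b ^ k * r ^ t)) * p + ε :=
            mean.trans (by gcongr)
        _ = (t + 1 : ℕ) * ε + b ^ (k + 1) * r ^ (t + 1) := by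
            rw [pow_succ r t, hr]; push_cast; field_simp; ring

end MarkovChain

section Expose

variable {n : ℕ} {m : Fin n} {A B : Finset (Fin n)} {K : Matrix (Fin n) (Fin n) ℝ}
  {x : Fin n → Bool}

/-- The matrix obtained from `K` when row and column `m` of a random symmetric matrix are exposed:
the entries in that row and column, up to the diagonal, are replaced by the random signs `x`. The
time `m` is a natural number, so that `expose` is the step of a Markov chain. -/
noncomputable def expose (m : ℕ) (K : Matrix (Fin n) (Fin n) ℝ) (x : Fin n → Bool) :
    Matrix (Fin n) (Fin n) ℝ :=
  fun i j => if max (i : ℕ) j = m then rad (x (min i j)) else K i j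

theorem expose_apply_of_lt {i j : Fin n} (hi : i < m) (hj : j < m) : expose m K x i j = K i j :=
  if_neg (max_lt hi hj : max (i : ℕ) j < m).ne

theorem expose_apply_row {j : Fin n} (hj : j ≤ m) : expose m K x m j = rad (x j) := by
  rw [expose, if_pos (max_eq_left (Fin.le_def.1 hj)), min_eq_right hj]

theorem expose_apply_col {i : Fin n} (hi : i ≤ m) : expose m K x i m = rad (x i) := by
  rw [expose, if_pos (max_eq_right (Fin.le_def.1 hi)), min_eq_left hi]

theorem permOn_expose (hA : ∀ i ∈ A, i < m) (hB : ∀ j ∈ B, j < m) :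
    permOn (expose m K x) A B = permOn K A B :=
  permOn_congr fun i hi j hj => expose_apply_of_lt (hA i hi) (hB j hj)

theorem permOn_expose_insert (hA : ∀ i ∈ A, i < m) (hB : ∀ j ∈ B, j < m) :
    permOn (expose m K x) (insert m A) B = ∑ j ∈ B, rad (x j) * permOn K A (B.erase j) := by
  rw [permOn_insert_row _ fun h => (hA m h).false]
  refine sum_congr rfl fun j hj => ?_
  rw [expose_apply_row (hB j hj).le, permOn_expose hA fun j' h => hB j' (mem_of_mem_erase h)]

theorem permOn_expose_insert_insert (hA : ∀ i ∈ A, i < m) (hB : ∀ j ∈ B, j < m) :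
    permOn (expose m K x) (insert m A) (insert m B) =
      rad (x m) * permOn K A B + (rad ∘ x) ⬝ᵥ permCofactor K A B *ᵥ (rad ∘ x) := by
  have cofactor_eq : permCofactor (expose m K x) A B = permCofactor K A B :=
    permCofactor_congr fun i hi j hj => expose_apply_of_lt (hA i hi) (hB j hj)
  rw [permOn_insert_insert _ (fun h => (hA m h).false) fun h => (hB m h).false,
    expose_apply_row le_rfl, permOn_expose hA hB, cofactor_eq]
  simp only [dotProduct, mulVec, mul_sum]
  congr! 3 with i _ j _
  by_cases hij : i ∈ A ∧ j ∈ B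
  · rw [col_apply, row_apply, expose_apply_col (hA i hij.1).le, expose_apply_row (hB j hij.2).le]
    rfl
  · simp [permCofactor, hij]

end Expose

section Cofactor

variable {n : ℕ} {A B : Finset (Fin n)} {K : Matrix (Fin n) (Fin n) ℝ}

theorem permCofactor_insert_insert {a b : Fin n} (ha : a ∉ A) (hb : b ∉ B) :
    permCofactor K (insert a A) (insert b B) a b = permOn K A B := by
  simp [permCofactor, ha, hb]

theorem permCofactor_insert_erase {i a b : Fin n} (ha : a ∈ B) (hb : b ∉ B) :
    permCofactor K A (insert b (B.erase a)) i b = permCofactor K A B i a := by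
  have hb' : b ∉ B.erase a := fun h => hb (mem_of_mem_erase h)
  simp only [permCofactor, mem_insert_self, ha, erase_insert hb']

theorem le_abs_add_of_two_mul_le_abs {μ P Q₁ Q₂ : ℝ} (hP : 2 * μ ≤ |P|) :
    μ ≤ |P + Q₁| ∨ μ ≤ |P + Q₂| ∨ μ ≤ |Q₁ + Q₂| := by
  by_contra! h
  simp only [abs_lt] at h
  rcases le_abs.1 hP with hP | hP <;> linarith

theorem exists_le_abs_permCofactor_add {a b₁ b₂ : Fin n} {μ : ℝ} (ha : a ∉ A) (hb₁ : b₁ ∉ B)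
    (hb₂ : b₂ ∉ B) (hb : b₁ ≠ b₂) (hP : 2 * μ ≤ |permOn K A B|) :
    ∃ C ⊆ insert b₁ (insert b₂ B), #C = #B + 1 ∧ ∃ p q, p ≠ q ∧
      μ ≤ |permCofactor K (insert a A) C p q + permCofactor K (insert a A) C q p| := by
  let Q (b : Fin n) : ℝ := permCofactor K (insert a A) (insert b B) b a
  have sub₁ : insert b₁ B ⊆ insert b₁ (insert b₂ B) := insert_subset_insert _ (subset_insert ..)
  have sub₂ : insert b₂ B ⊆ insert b₁ (insert b₂ B) := subset_insert ..
  have of_add_Q {b : Fin n} (hb : b ∉ B) (hab : a ≠ b)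
      (hsub : insert b B ⊆ insert b₁ (insert b₂ B)) (h : μ ≤ |permOn K A B + Q b|) :
      ∃ C ⊆ insert b₁ (insert b₂ B), #C = #B + 1 ∧ ∃ p q, p ≠ q ∧
        μ ≤ |permCofactor K (insert a A) C p q + permCofactor K (insert a A) C q p| :=
    ⟨insert b B, hsub, card_insert_of_notMem hb, a, b, hab, by
      rwa [permCofactor_insert_insert ha hb]⟩
  by_cases haB : a ∈ B
  · have ne_of_notMem {b : Fin n} (hb : b ∉ B) : a ≠ b := ne_of_mem_of_not_mem haB hb
    rcases le_abs_add_of_two_mul_le_abs (Q₁ := Q b₁) (Q₂ := Q b₂) hP with h | h | h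
    · exact of_add_Q hb₁ (ne_of_notMem hb₁) sub₁ h
    · exact of_add_Q hb₂ (ne_of_notMem hb₂) sub₂ h
    · have swap_insert : insert b₂ ((insert b₁ B).erase a) = insert b₁ ((insert b₂ B).erase a) := by
        rw [erase_insert_of_ne (ne_of_notMem hb₁).symm, erase_insert_of_ne (ne_of_notMem hb₂).symm,
          insert_comm]
      refine ⟨insert b₂ ((insert b₁ B).erase a), ?_, ?_, b₁, b₂, hb, ?_⟩
      · exact (insert_subset_insert _ (erase_subset ..)).trans_eq (insert_comm ..)
      · rw [card_insert_of_notMem (by simp [hb.symm, hb₂]), card_erase_of_mem (by simp [haB]),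
          card_insert_of_notMem hb₁, Nat.add_sub_cancel]
      · rwa [permCofactor_insert_erase (by simp [haB]) (by simp [hb.symm, hb₂]), swap_insert,
          permCofactor_insert_erase (by simp [haB]) (by simp [hb, hb₁])]
  · have Q_eq_zero {b : Fin n} (hab : a ≠ b) : Q b = 0 := by simp [Q, permCofactor, hab, haB]
    have le_abs_add {b : Fin n} (hab : a ≠ b) : μ ≤ |permOn K A B + Q b| := by
      rw [Q_eq_zero hab, add_zero]
      linarith [abs_nonneg (permOn K A B)]
    obtain hab | rfl := ne_or_eq a b₁
    · exact of_add_Q hb₁ hab sub₁ (le_abs_add hab)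
    · exact of_add_Q hb₂ hb sub₂ (le_abs_add hb)

end Cofactor

section HeavyColumns

variable {n m s d : ℕ} {μ : ℝ} {K : Matrix (Fin n) (Fin n) ℝ} {B : Finset (Fin n)}

/-- The rows `s, …, m - 1`, counted from `0`. -/
def rowsOf (n s m : ℕ) : Finset (Fin n) := {i | s ≤ (i : ℕ) ∧ (i : ℕ) < m}

/-- The columns below `d` that do not belong to `B`. -/
def missing (d : ℕ) (B : Finset (Fin n)) : Finset (Fin n) := {j | (j : ℕ) < d ∧ j ∉ B}

/-- `B` is a set of `m - s` columns below `m` which together with the rows `s, …, m - 1` spans a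
`μ`-heavy submatrix of `K`. The number `s` of missing columns is called the deficit. -/
structure HeavyCols (K : Matrix (Fin n) (Fin n) ℝ) (μ : ℝ) (m s : ℕ) (B : Finset (Fin n)) :
    Prop where
  lt : ∀ j ∈ B, (j : ℕ) < m
  card_add : #B + s = m
  le_abs_permOn : μ ≤ |permOn K (rowsOf n s m) B|

/-- Some set of columns is heavy at time `m` with deficit `s`. -/
def HasHeavy (μ : ℝ) (m s : ℕ) (K : Matrix (Fin n) (Fin n) ℝ) : Prop :=
  ∃ B, HeavyCols K μ m s B

/-- Some set of columns that lacks at most `k` of the columns below `d` is heavy at time `m` with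
deficit `s`. -/
def HasFilled (μ : ℝ) (m s d k : ℕ) (K : Matrix (Fin n) (Fin n) ℝ) : Prop :=
  ∃ B, HeavyCols K μ m s B ∧ #(missing d B) ≤ k

theorem mem_rowsOf {i : Fin n} : i ∈ rowsOf n s m ↔ s ≤ (i : ℕ) ∧ (i : ℕ) < m := by
  simp [rowsOf]

theorem mem_missing {j : Fin n} : j ∈ missing d B ↔ (j : ℕ) < d ∧ j ∉ B := by
  simp [missing]

theorem rowsOf_succ_right (hm : m < n) (hs : s ≤ m) :
    rowsOf n s (m + 1) = insert ⟨m, hm⟩ (rowsOf n s m) := by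
  ext i
  simp only [mem_insert, mem_rowsOf, Fin.ext_iff]
  omega

theorem insert_rowsOf_succ_left (hm : m ≤ n) (hs : s < m) :
    insert ⟨s, hs.trans_le hm⟩ (rowsOf n (s + 1) m) = rowsOf n s m := by
  ext i
  simp only [mem_insert, mem_rowsOf, Fin.ext_iff]
  omega

theorem missing_insert (b : Fin n) : missing d (insert b B) = (missing d B).erase b := by
  ext j
  simp only [mem_missing, mem_insert, mem_erase]
  tauto

theorem HeavyCols.card_missing (hB : HeavyCols K μ m s B) (hm : m ≤ n) : #(missing m B) = s := by
  have missing_eq : missing m B = ({j | (j : ℕ) < m} : Finset (Fin n)) \ B := by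
    ext j
    simp [mem_missing]
  have subset_lt : B ⊆ ({j | (j : ℕ) < m} : Finset (Fin n)) := fun j hj => by simpa using hB.lt j hj
  rw [missing_eq, card_sdiff_of_subset subset_lt, Fin.card_filter_val_lt]
  have := hB.card_add
  omega

theorem prob_forall_not_heavyCols_insert_le (hm : m < n) (hB : HeavyCols K μ m s B)
    {T : Finset (Fin n)} (hT : T ⊆ missing m B) :
    prob (fun x => ∀ b ∈ T, ¬HeavyCols (expose m K x) μ (m + 1) s (insert b B)) ≤
      (1 / 2) ^ #T := by
  let g (b : Fin n) (x : Fin n → Bool) : ℝ :=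
    ∑ j ∈ B, rad (x j) * permOn K (rowsOf n s m) ((insert b B).erase j)
  have hsm : s ≤ m := hB.card_add ▸ Nat.le_add_left ..
  have hT' {b : Fin n} (hb : b ∈ T) : (b : ℕ) < m ∧ b ∉ B := mem_missing.1 (hT hb)
  have lt_of_mem_insert {b : Fin n} (hb : b ∈ T) : ∀ j ∈ insert b B, (j : ℕ) < m :=
    forall_mem_insert .. |>.2 ⟨(hT' hb).1, hB.lt⟩
  have permOn_eq {b : Fin n} (hb : b ∈ T) (x : Fin n → Bool) :
      permOn (expose m K x) (rowsOf n s (m + 1)) (insert b B) =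
        rad (x b) * permOn K (rowsOf n s m) B + g b x := by
    rw [rowsOf_succ_right hm hsm, permOn_expose_insert (m := ⟨m, hm⟩)
      (fun i hi => (mem_rowsOf.1 hi).2) (lt_of_mem_insert hb), sum_insert (hT' hb).2,
      erase_insert (hT' hb).2]
  refine (prob_mono fun x hx b hb => ?_).trans
    (prob_forall_abs_rad_mul_add_lt hB.le_abs_permOn (g := g) fun b _ x y hxy => ?_)
  · by_contra! hle
    refine hx b hb ⟨fun j hj => (lt_of_mem_insert hb j hj).trans (Nat.lt_succ_self m), ?_, ?_⟩
    · rw [card_insert_of_notMem (hT' hb).2, add_right_comm, hB.card_add]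
    · rwa [permOn_eq hb]
  · exact sum_congr rfl fun j hj => by rw [hxy j fun hjT => (hT' hjT).2 hj]

theorem one_fourth_le_prob_hasHeavy_expose (hm : m < n) (hs : 1 ≤ s)
    (hK : HasHeavy (2 * μ) m (s + 1) K) :
    1 / 4 ≤ prob fun x => HasHeavy μ (m + 1) s (expose m K x) := by
  obtain ⟨B, hB⟩ := hK
  have hsm : s < m := by have := hB.card_add; omega
  obtain ⟨b₁, hb₁, b₂, hb₂, hb⟩ :=
    one_lt_card.1 (show 1 < #(missing m B) by rw [hB.card_missing hm.le]; omega)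
  rw [mem_missing] at hb₁ hb₂
  obtain ⟨C, hC, card_C, p, q, hpq, hle⟩ := exists_le_abs_permCofactor_add
    (a := ⟨s, hsm.trans hm⟩) (by simp [mem_rowsOf]) hb₁.2 hb₂.2 hb hB.le_abs_permOn
  rw [insert_rowsOf_succ_left hm.le hsm] at hle
  have C_lt (j : Fin n) (hj : j ∈ C) : (j : ℕ) < m := by
    rcases mem_insert.1 (hC hj) with rfl | hj
    · exact hb₁.1
    · rcases mem_insert.1 hj with rfl | hj
      exacts [hb₂.1, hB.lt j hj]
  refine (one_fourth_le_prob_le_abs_quadratic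
    (Pi.single ⟨m, hm⟩ (permOn K (rowsOf n s m) C)) hpq hle).trans
    (prob_mono fun x hx => ⟨insert ⟨m, hm⟩ C, ?_, ?_, ?_⟩)
  · exact forall_mem_insert .. |>.2
      ⟨Nat.lt_succ_self m, fun j hj => (C_lt j hj).trans (Nat.lt_succ_self m)⟩
  · rw [card_insert_of_notMem fun h => (C_lt _ h).false, card_C, ← hB.card_add]
    omega
  · rwa [rowsOf_succ_right hm hsm.le, permOn_expose_insert_insert (m := ⟨m, hm⟩)
      (fun i hi => (mem_rowsOf.1 hi).2) C_lt, mul_comm, ← Function.comp_apply (f := rad),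
      ← single_dotProduct]

end HeavyColumns

section Phases

variable {n : ℕ}

/-- Bound for the failure probability of a phase of `t` steps which starts at level `k` and ends at
level `0`, when a step is lost with probability at most `2⁻ˢ`. The second term is the exponential
potential with base `4 / 3`, which bounds the probability of fewer than `k` descents; if a step
fails to descend with probability at most `p`, then `r = p + (1 - p) * (3 / 4)`. -/
noncomputable def phaseError (t s k : ℕ) (r : ℝ) : ℝ := t * (1 / 2) ^ s + (4 / 3) ^ k * r ^ t

theorem phaseError_nonneg (t s k : ℕ) {r : ℝ} (hr : 0 ≤ r) : 0 ≤ phaseError t s k r := by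
  rw [phaseError]; positivity

theorem leadsTo_hasHeavy_stay {μ : ℝ} {m s : ℕ} (hm : m < n) :
    LeadsTo (expose (n := n)) m 1 (HasHeavy μ m s) (HasHeavy μ (m + 1) s) ((1 / 2) ^ s) := by
  rw [leadsTo_one_iff]
  rintro K ⟨B, hB⟩
  have hprob := prob_forall_not_heavyCols_insert_le hm hB subset_rfl
  rw [hB.card_missing hm.le] at hprob
  exact (prob_mono fun x hx b _ hb => hx ⟨_, hb⟩).trans hprob

theorem leadsTo_hasHeavy_descend {μ : ℝ} {m s : ℕ} (hm : m < n) (hs : 1 ≤ s) :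
    LeadsTo (expose (n := n)) m 1 (HasHeavy (2 * μ) m (s + 1)) (HasHeavy μ (m + 1) s) (3 / 4) := by
  rw [leadsTo_one_iff]
  intro K hK
  rw [prob_not]
  linarith [one_fourth_le_prob_hasHeavy_expose hm hs hK]

theorem leadsTo_hasHeavy {θ : ℝ} {s : ℕ} (hs : 1 ≤ s) (m t k : ℕ) (hmt : m + t ≤ n) :
    LeadsTo (expose (n := n)) m t (HasHeavy (θ * 2 ^ (s + k)) m (s + k))
      (HasHeavy (θ * 2 ^ s) (m + t) s) (phaseError t s k (15 / 16)) := by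
  refine (leadsTo_level_zero (Good := fun i k => HasHeavy (θ * 2 ^ (s + k)) i (s + k))
    (p := 3 / 4) (b := 4 / 3) (ε := (1 / 2) ^ s)
    (by positivity) (by norm_num) (by norm_num) (by norm_num)
    (fun i _ hi k => ?_) (fun i _ hi k => ?_) k).mono (by norm_num [phaseError])
  · exact (leadsTo_hasHeavy_stay (by omega)).mono
      (pow_le_pow_of_le_one (by norm_num) (by norm_num) (by omega))
  · have two_mul_threshold : θ * 2 ^ (s + (k + 1)) = 2 * (θ * 2 ^ (s + k)) := by ring
    rw [two_mul_threshold, ← add_assoc]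
    exact leadsTo_hasHeavy_descend (by omega) (by omega)

theorem leadsTo_hasFilled_stay {μ : ℝ} {m s d k : ℕ} (hm : m < n) :
    LeadsTo (expose (n := n)) m 1 (HasFilled μ m s d k) (HasFilled μ (m + 1) s d k)
      ((1 / 2) ^ s) := by
  rw [leadsTo_one_iff]
  rintro K ⟨B, hB, hk⟩
  have hprob := prob_forall_not_heavyCols_insert_le hm hB subset_rfl
  rw [hB.card_missing hm.le] at hprob
  refine (prob_mono fun x hx b _ hb => hx ⟨_, hb, ?_⟩).trans hprob
  rw [missing_insert]
  exact card_erase_le.trans hk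

theorem HeavyCols.exists_card_missing_insert_le {μ : ℝ} {m s d : ℕ}
    {K : Matrix (Fin n) (Fin n) ℝ} {B : Finset (Fin n)} (hB : HeavyCols K μ m s B) (hm : m ≤ n)
    (hs : 1 ≤ s) (hd : d ≤ m) :
    ∃ b ∈ missing m B, #(missing d (insert b B)) ≤ #(missing d B) - 1 := by
  simp only [missing_insert]
  obtain hempty | ⟨b, hb⟩ := (missing d B).eq_empty_or_nonempty
  · obtain ⟨b, hb⟩ := card_pos.1 (hs.trans_eq (hB.card_missing hm).symm)
    exact ⟨b, hb, by simp [hempty]⟩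
  · have hb' := mem_missing.1 hb
    exact ⟨b, mem_missing.2 ⟨hb'.1.trans_le hd, hb'.2⟩, (card_erase_of_mem hb).le⟩

theorem leadsTo_hasFilled_descend {μ : ℝ} {m s d k : ℕ} (hm : m < n) (hs : 1 ≤ s) (hd : d ≤ m) :
    LeadsTo (expose (n := n)) m 1 (HasFilled μ m s d (k + 1)) (HasFilled μ (m + 1) s d k)
      (1 / 2) := by
  rw [leadsTo_one_iff]
  rintro K ⟨B, hB, hk⟩
  obtain ⟨b, hb, hcard⟩ := hB.exists_card_missing_insert_le hm.le hs hd
  have hprob := prob_forall_not_heavyCols_insert_le hm hB (singleton_subset_iff.2 hb)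
  rw [card_singleton, pow_one] at hprob
  refine (prob_mono fun x hx c hc hheavy => hx ⟨insert c B, hheavy, ?_⟩).trans hprob
  rw [mem_singleton.1 hc]
  omega

theorem leadsTo_hasFilled {μ : ℝ} {s : ℕ} (hs : 1 ≤ s) (d t : ℕ) (hdt : d + t ≤ n) :
    LeadsTo (expose (n := n)) d t (HasHeavy μ d s) (HasFilled μ (d + t) s d 0)
      (phaseError t s s (7 / 8)) := by
  rintro K ⟨B, hB⟩
  have hfill := leadsTo_level_zero (step := expose (n := n)) (m := d) (t := t)
    (Good := fun i k => HasFilled μ i s d k)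
    (p := 1 / 2) (b := 4 / 3) (ε := (1 / 2) ^ s)
    (by positivity) (by norm_num) (by norm_num) (by norm_num)
    (fun i _ hi k => leadsTo_hasFilled_stay (by omega))
    (fun i hi hit k => leadsTo_hasFilled_descend (by omega) hs hi) s
  exact hfill.mono (by norm_num [phaseError]) K ⟨B, hB, (hB.card_missing (by omega)).le⟩

/-- Bound for the failure probability of the three phases which lower the deficit from `R` to `L²`,
then from `L²` to `L`, and finally fill all but the last `3 * L` columns. -/
noncomputable def growError (L R : ℕ) : ℝ :=
  phaseError (8 * R) (L ^ 2) (R - L ^ 2) (15 / 16) +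
    (phaseError (5 * L ^ 2) L (L ^ 2 - L) (15 / 16) + phaseError (3 * L) L L (7 / 8))

theorem leadsTo_grow {θ : ℝ} {m L R : ℕ} (hL : 1 ≤ L) (hR : L ^ 2 ≤ R)
    (hm : m + 8 * R + 5 * L ^ 2 + 3 * L ≤ n) :
    LeadsTo (expose (n := n)) m (8 * R + (5 * L ^ 2 + 3 * L)) (HasHeavy (θ * 2 ^ R) m R)
      (HasFilled (θ * 2 ^ L) (m + 8 * R + 5 * L ^ 2 + 3 * L) L (m + 8 * R + 5 * L ^ 2) 0)
      (growError L R) := by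
  have hL' : L ≤ L ^ 2 := Nat.le_self_pow two_ne_zero L
  have first := leadsTo_hasHeavy (n := n) (θ := θ) (s := L ^ 2) (by omega) m (8 * R) (R - L ^ 2)
    (by omega)
  have second := leadsTo_hasHeavy (n := n) (θ := θ) hL (m + 8 * R) (5 * L ^ 2) (L ^ 2 - L)
    (by omega)
  have third := leadsTo_hasFilled (n := n) (μ := θ * 2 ^ L) hL (m + 8 * R + 5 * L ^ 2) (3 * L) hm
  rw [Nat.add_sub_cancel' hR] at first
  rw [Nat.add_sub_cancel' hL'] at second
  have third_nonneg := phaseError_nonneg (3 * L) L L (r := 7 / 8) (by norm_num)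
  exact first.trans (second.trans third third_nonneg)
    (add_nonneg (phaseError_nonneg _ _ _ (by norm_num)) third_nonneg)

end Phases

section ErrorBounds

theorem pow_mul_pow_mul_le_pow {b q r : ℝ} {a k t : ℕ} (hb : 1 ≤ b) (hr : 0 ≤ r)
    (hq : b * r ^ t ≤ q) (hk : k ≤ a) : b ^ k * r ^ (t * a) ≤ q ^ a :=
  calc b ^ k * r ^ (t * a) ≤ b ^ a * (r ^ t) ^ a := by rw [pow_mul]; gcongr
    _ = (b * r ^ t) ^ a := (mul_pow ..).symm
    _ ≤ q ^ a := by gcongr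

theorem pow_le_rpow_log_div {a C x : ℝ} {k : ℕ} (ha : 0 < a) (ha' : a ≤ 1) (hC : 0 < C)
    (hx : 0 < x) (hlog : Real.log x ≤ C * k) : a ^ k ≤ x ^ (Real.log a / C) := by
  rw [Real.rpow_def_of_pos hx, ← Real.rpow_natCast, Real.rpow_def_of_pos ha, Real.exp_le_exp]
  have hk : Real.log x / C ≤ k := (div_le_iff₀' hC).2 hlog
  calc Real.log a * k ≤ Real.log a * (Real.log x / C) :=
        mul_le_mul_of_nonpos_left hk (Real.log_nonpos ha.le ha')
    _ = Real.log x * (Real.log a / C) := by ring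

theorem le_two_pow_of_log_le {x : ℝ} {k : ℕ} (hx : 0 < x) (hlog : Real.log x ≤ k) :
    x ≤ 2 ^ (2 * k) := by
  rw [← Real.log_le_log_iff hx (by positivity), Real.log_pow]
  push_cast
  nlinarith [Real.log_two_gt_d9, Nat.cast_nonneg (α := ℝ) k]

variable {n L R : ℕ}

theorem poly_le_pow (hL : 100 ≤ L) : 5 * (L : ℝ) ^ 2 + 3 * L ≤ (9 / 5) ^ L := by
  induction L, hL using Nat.le_induction with
  | base => norm_num
  | succ k hk ih =>
    have hk' : (100 : ℝ) ≤ k := by exact_mod_cast hk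
    rw [pow_succ (9 / 5 : ℝ) k]
    push_cast
    nlinarith

theorem mul_half_pow_le_of_le_pow {t : ℝ} (ht : t ≤ (9 / 5) ^ L) :
    t * (1 / 2) ^ L ≤ (9 / 10) ^ L :=
  calc t * (1 / 2) ^ L ≤ (9 / 5) ^ L * (1 / 2) ^ L := by gcongr
    _ = (9 / 10) ^ L := by rw [← mul_pow]; norm_num

theorem phaseError_first_le (hL : 100 ≤ L) (hlog : Real.log n / 20 < L) (hLR : L ^ 2 < R)
    (hR : 8 * R ≤ n) :
    phaseError (8 * R) (L ^ 2) (R - L ^ 2) (15 / 16) ≤ 2 * (9 / 10) ^ L := by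
  have step_lost : ((8 * R : ℕ) : ℝ) * (1 / 2) ^ L ^ 2 ≤ (9 / 10) ^ L := by
    have hn : (0 : ℝ) < n := by exact_mod_cast (by omega : 0 < n)
    have hn_le : (n : ℝ) ≤ 2 ^ (2 * (20 * L)) := le_two_pow_of_log_le hn (by push_cast; linarith)
    calc ((8 * R : ℕ) : ℝ) * (1 / 2) ^ L ^ 2
        ≤ 2 ^ (2 * (20 * L)) * (1 / 2) ^ (2 * (20 * L) + L) :=
          mul_le_mul ((Nat.cast_le.2 hR).trans hn_le)
            (pow_le_pow_of_le_one (by norm_num) (by norm_num) (by nlinarith)) (by positivity)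
            (by positivity)
      _ = (1 / 2) ^ L := by rw [pow_add, ← mul_assoc, ← mul_pow]; norm_num
      _ ≤ (9 / 10) ^ L := pow_le_pow_left₀ (by norm_num) (by norm_num) L
  have too_slow : (4 / 3 : ℝ) ^ (R - L ^ 2) * (15 / 16) ^ (8 * R) ≤ (9 / 10) ^ L :=
    (pow_mul_pow_mul_le_pow (q := 9 / 10) (by norm_num) (by norm_num) (by norm_num)
      (Nat.sub_le ..)).trans (pow_le_pow_of_le_one (by norm_num) (by norm_num) (by nlinarith))
  rw [phaseError]
  linarith

theorem phaseError_second_le (hL : 100 ≤ L) :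
    phaseError (5 * L ^ 2) L (L ^ 2 - L) (15 / 16) ≤ 2 * (9 / 10) ^ L := by
  have step_lost : ((5 * L ^ 2 : ℕ) : ℝ) * (1 / 2) ^ L ≤ (9 / 10) ^ L :=
    mul_half_pow_le_of_le_pow (by push_cast; linarith [poly_le_pow hL])
  have too_slow : (4 / 3 : ℝ) ^ (L ^ 2 - L) * (15 / 16) ^ (5 * L ^ 2) ≤ (9 / 10) ^ L :=
    calc (4 / 3 : ℝ) ^ (L ^ 2 - L) * (15 / 16) ^ (5 * L ^ 2) ≤ (97 / 100) ^ L ^ 2 :=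
          pow_mul_pow_mul_le_pow (by norm_num) (by norm_num) (by norm_num) (Nat.sub_le ..)
      _ ≤ (97 / 100) ^ (4 * L) :=
          pow_le_pow_of_le_one (by norm_num) (by norm_num) (by nlinarith)
      _ ≤ (9 / 10) ^ L := by rw [pow_mul]; gcongr; norm_num
  rw [phaseError]
  linarith

theorem phaseError_third_le (hL : 100 ≤ L) :
    phaseError (3 * L) L L (7 / 8) ≤ 2 * (9 / 10) ^ L := by
  have step_lost : ((3 * L : ℕ) : ℝ) * (1 / 2) ^ L ≤ (9 / 10) ^ L :=
    mul_half_pow_le_of_le_pow (by push_cast; nlinarith [poly_le_pow hL])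
  have too_slow : (4 / 3 : ℝ) ^ L * (7 / 8) ^ (3 * L) ≤ (9 / 10) ^ L :=
    pow_mul_pow_mul_le_pow (by norm_num) (by norm_num) (by norm_num) le_rfl
  rw [phaseError]
  linarith

theorem growError_le (hL : 100 ≤ L) (hlog : Real.log n / 20 < L) (hLR : L ^ 2 < R)
    (hR : 8 * R ≤ n) : growError L R ≤ 1 / 8 * (n : ℝ) ^ (Real.log (19 / 20) / 20) := by
  have hn : (0 : ℝ) < n := by exact_mod_cast (by omega : 0 < n)
  have gain : 48 * (9 / 10 : ℝ) ^ L ≤ (19 / 20) ^ L :=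
    calc 48 * (9 / 10 : ℝ) ^ L ≤ (19 / 18) ^ 100 * (9 / 10) ^ L := by gcongr; norm_num
      _ ≤ (19 / 18) ^ L * (9 / 10) ^ L := by gcongr; norm_num
      _ = (19 / 20) ^ L := by rw [← mul_pow]; norm_num
  have rpow_bound : (19 / 20 : ℝ) ^ L ≤ (n : ℝ) ^ (Real.log (19 / 20) / 20) :=
    pow_le_rpow_log_div (by norm_num) (by norm_num) (by norm_num) hn (by linarith)
  rw [growError]
  linarith [phaseError_first_le hL hlog hLR hR, phaseError_second_le hL, phaseError_third_le hL]

end ErrorBounds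

section SymmetricExtension

variable {n n' : ℕ} {M : Matrix (Fin n') (Fin n') ℝ} {Q : Matrix (Fin n) (Fin n) ℝ → Prop}

theorem expect_expect_update {ι β : Type*} [Fintype ι] [DecidableEq ι] [Fintype β] [Nonempty β]
    (F : (ι → β) → ℝ) (i : ι) : 𝔼 ω, 𝔼 x, F (Function.update ω i x) = 𝔼 ω, F ω := by
  have swap_involutive : Function.Involutive
      fun p : (ι → β) × β => (Function.update p.1 i p.2, p.1 i) := fun p => by simp
  calc 𝔼 ω, 𝔼 x, F (Function.update ω i x)
      = 𝔼 p : (ι → β) × β, F (Function.update p.1 i p.2) := (expect_product' univ univ _).symm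
    _ = 𝔼 p : (ι → β) × β, F p.1 :=
        Fintype.expect_equiv swap_involutive.toPerm _ _ fun _ => rfl
    _ = 𝔼 ω, F ω := (expect_product' univ univ fun ω _ => F ω).trans (by simp)

theorem extSym_flip_apply {i j : Fin n} (hij : ¬((i : ℕ) < n' ∧ (j : ℕ) < n'))
    (ω : Fin n → Fin n → Bool) :
    extSym n M (fun i j => ω j i) i j = rad (ω (max i j) (min i j)) := by
  rw [extSym, dif_neg hij]
  split_ifs with hle
  · rw [max_eq_right hle, min_eq_left hle]
  · rw [max_eq_left (not_le.1 hle).le, min_eq_right (not_le.1 hle).le]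

theorem extSym_update_eq_expose {m : Fin n} (hm : n' ≤ m) (ω : Fin n → Fin n → Bool)
    (x : Fin n → Bool) :
    (extSym n M fun i j => Function.update ω m x j i) =
      expose m (extSym n M fun i j => ω j i) x := by
  ext i j
  simp only [expose, ← Fin.coe_max, Fin.val_inj]
  by_cases hblock : (i : ℕ) < n' ∧ (j : ℕ) < n'
  · rw [if_neg (by rw [Fin.ext_iff, Fin.coe_max]; omega), extSym, extSym, dif_pos hblock,
      dif_pos hblock]
  · rw [extSym_flip_apply hblock, extSym_flip_apply hblock]
    split_ifs with hij
    · rw [hij, Function.update_self]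
    · rw [Function.update_of_ne hij]

/- The data are transposed so that the function `ω m` consists of the signs exposed at time `m`, and
exposing them amounts to resampling one coordinate of `ω`. -/
theorem expect_failProb_expose_extSym (t : ℕ) {m : ℕ} (hm : n' ≤ m) (hmt : m + t ≤ n) :
    𝔼 ω : Fin n → Fin n → Bool, failProb expose Q t m (extSym n M fun i j => ω j i) =
      prob fun ω => ¬Q (extSym n M ω) := by
  induction t generalizing m with
  | zero =>
    refine Fintype.expect_equiv (Equiv.piComm fun _ _ => Bool) _ _ fun ω => ?_
    by_cases hQ : Q (extSym n M fun i j => ω j i)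
    · exact (if_pos hQ).trans (if_neg (not_not.2 hQ)).symm
    · exact (if_neg hQ).trans (if_pos hQ).symm
  | succ t ih =>
    have hm_lt : m < n := by omega
    calc 𝔼 ω : Fin n → Fin n → Bool, failProb expose Q (t + 1) m (extSym n M fun i j => ω j i)
        = 𝔼 ω : Fin n → Fin n → Bool, 𝔼 x, failProb expose Q t (m + 1)
            (extSym n M fun i j => Function.update ω ⟨m, hm_lt⟩ x j i) := by
          simp only [failProb, extSym_update_eq_expose (m := ⟨m, hm_lt⟩) hm]
      _ = 𝔼 ω : Fin n → Fin n → Bool,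
            failProb expose Q t (m + 1) (extSym n M fun i j => ω j i) :=
          expect_expect_update (fun ω : Fin n → Fin n → Bool =>
            failProb expose Q t (m + 1) (extSym n M fun i j => ω j i)) ⟨m, hm_lt⟩
      _ = prob fun ω => ¬Q (extSym n M ω) := ih (by omega) (by omega)

theorem probExt_eq_prob : probExt n M Q = prob fun ω => Q (extSym n M ω) := by
  simp [prob_eq_card_div_card, probExt, pow_mul]

theorem probExt_mono {Q' : Matrix (Fin n) (Fin n) ℝ → Prop} (h : ∀ K, Q K → Q' K) :
    probExt n M Q ≤ probExt n M Q' := by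
  rw [probExt_eq_prob, probExt_eq_prob]
  exact prob_mono fun ω => h _

theorem LeadsTo.one_sub_le_probExt {m t : ℕ} {P : Matrix (Fin n) (Fin n) ℝ → Prop} {δ : ℝ}
    (h : LeadsTo expose m t P Q δ) (hP : ∀ ω, P (extSym n M ω)) (hm : n' ≤ m)
    (hmt : m + t ≤ n) : 1 - δ ≤ probExt n M Q := by
  have fail_le : (prob fun ω : Fin n → Fin n → Bool => ¬Q (extSym n M ω)) ≤ δ := by
    rw [← expect_failProb_expose_extSym t hm hmt,
      ← Fintype.expect_const (ι := Fin n → Fin n → Bool) δ]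
    exact expect_le_expect fun ω _ => h _ (hP _)
  rw [prob_not] at fail_le
  rw [probExt_eq_prob]
  linarith

theorem extSym_submatrix_castLE (h : n' ≤ n) (ω : Fin n → Fin n → Bool) :
    (extSym n M ω).submatrix (Fin.castLEEmb h) (Fin.castLEEmb h) = M := by
  ext i j
  simp [extSym]

theorem rowsOf_eq_map_castLE (h : n' ≤ n) (s : ℕ) :
    rowsOf n s n' = ({i | s ≤ (i : ℕ)} : Finset (Fin n')).map (Fin.castLEEmb h) := by
  ext i
  simp only [mem_rowsOf, mem_map, mem_filter, mem_univ, true_and]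
  exact ⟨fun hi => ⟨⟨i, hi.2⟩, hi.1, rfl⟩, by rintro ⟨j, hj, rfl⟩; exact ⟨hj, j.2⟩⟩

theorem rowsOf_self (n s : ℕ) : rowsOf n s n = ({i | s ≤ (i : ℕ)} : Finset (Fin n)) := by
  ext i
  simp [mem_rowsOf]

theorem hasHeavy_extSym {lam : ℝ} {s : ℕ} {B : Finset (Fin n')} (h : n' ≤ n)
    (card_B : #B + s = n') (hB : lam ≤ |permOn M {i | s ≤ (i : ℕ)} B|) (ω : Fin n → Fin n → Bool) :
    HasHeavy lam n' s (extSym n M ω) := by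
  refine ⟨B.map (Fin.castLEEmb h), ?_, by rwa [card_map], ?_⟩
  · intro j hj
    obtain ⟨i, -, rfl⟩ := mem_map.1 hj
    exact i.2
  · rwa [rowsOf_eq_map_castLE h, permOn_map, extSym_submatrix_castLE]

theorem HasFilled.exists_heavy {μ : ℝ} {s d : ℕ} {K : Matrix (Fin n) (Fin n) ℝ}
    (hK : HasFilled μ n s d 0 K) :
    ∃ B : Finset (Fin n), #B = n - s ∧ (∀ j : Fin n, (j : ℕ) < d → j ∈ B) ∧
      μ ≤ |permOn K {i | s ≤ (i : ℕ)} B| := by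
  obtain ⟨B, hB, hmissing⟩ := hK
  refine ⟨B, Nat.eq_sub_of_add_eq hB.card_add, fun j hj => ?_, rowsOf_self n s ▸ hB.le_abs_permOn⟩
  by_contra hjB
  exact card_ne_zero_of_mem (mem_missing.2 ⟨hj, hjB⟩) (Nat.le_zero.1 hmissing)

theorem one_sub_growError_le_probExt {lam : ℝ} {L R : ℕ} {B : Finset (Fin n')} (hL : 1 ≤ L)
    (hR : L ^ 2 ≤ R) (hn : n' + 8 * R + 5 * L ^ 2 + 3 * L = n) (card_B : #B + R = n')
    (hB : lam ≤ |permOn M {i | R ≤ (i : ℕ)} B|) :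
    1 - growError L R ≤ probExt n M fun Mn => ∃ B' : Finset (Fin n),
      #B' = n - L ∧ (∀ i : Fin n, (i : ℕ) < n - 3 * L → i ∈ B') ∧
      lam / 2 ^ (R - L) ≤ |permOn Mn {i | L ≤ (i : ℕ)} B'| := by
  have hLR : L ≤ R := (Nat.le_self_pow two_ne_zero L).trans hR
  have initial : lam / 2 ^ R * 2 ^ R = lam := by field_simp
  have final : lam / 2 ^ R * 2 ^ L = lam / 2 ^ (R - L) := by
    rw [pow_sub₀ _ two_ne_zero hLR]
    field_simp
  have grow := leadsTo_grow (n := n) (θ := lam / 2 ^ R) hL hR hn.le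
  rw [initial, final, hn, show n' + 8 * R + 5 * L ^ 2 = n - 3 * L by omega] at grow
  exact (grow.one_sub_le_probExt (hasHeavy_extSym (by omega) card_B hB) le_rfl (by omega)).trans
    (probExt_mono fun K => HasFilled.exists_heavy)

end SymmetricExtension

theorem grow_single_minor_end_general :
    ∃ c : ℝ, 0 < c ∧ ∃ n₀ : ℕ, ∀ n : ℕ, n₀ ≤ n → ∀ lam : ℝ,
      ∀ L R : ℕ, Real.log n / 20 < (L : ℝ) → L ^ 2 < R →
        (R : ℝ) < ((n : ℝ) - 5 * L ^ 2 - 3 * L) / 9 →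
        ∀ M : Matrix (Fin (n - 8 * R - 5 * L ^ 2 - 3 * L))
            (Fin (n - 8 * R - 5 * L ^ 2 - 3 * L)) ℝ,
          (∃ B : Finset (Fin (n - 8 * R - 5 * L ^ 2 - 3 * L)),
            B.card = n - 8 * R - 5 * L ^ 2 - 3 * L - R ∧
            lam ≤ |permOn M
              (univ.filter fun i : Fin (n - 8 * R - 5 * L ^ 2 - 3 * L) => R ≤ (i : ℕ))
              B|) →
          1 - (1 / 8) * (n : ℝ) ^ (-c) ≤
            probExt n M fun Mn => ∃ B' : Finset (Fin n),
              B'.card = n - L ∧ (∀ i : Fin n, (i : ℕ) < n - 3 * L → i ∈ B') ∧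
              lam / 2 ^ (R - L) ≤
                |permOn Mn (univ.filter fun i : Fin n => L ≤ (i : ℕ)) B'| := by
  refine ⟨-(Real.log (19 / 20) / 20), ?_, ⌈Real.exp 2000⌉₊, ?_⟩
  · linarith [Real.log_neg (x := 19 / 20) (by norm_num) (by norm_num)]
  rintro n hn lam L R hlog hLR hR M ⟨B, card_B, hB⟩
  have log_ge : 2000 ≤ Real.log n :=
    (Real.le_log_iff_exp_le ((Real.exp_pos _).trans_le (Nat.ceil_le.1 hn))).2 (Nat.ceil_le.1 hn)
  have hL : 100 ≤ L := by exact_mod_cast (by linarith : (100 : ℝ) ≤ L)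
  have size : 9 * R + 5 * L ^ 2 + 3 * L < n := by
    exact_mod_cast (by linarith : (9 * R + 5 * L ^ 2 + 3 * L : ℝ) < n)
  have error_le := growError_le hL hlog hLR (by omega)
  rw [neg_neg]
  exact (sub_le_sub_left error_le 1).trans
    (one_sub_growError_le_probExt (by omega) hLR.le (by omega) (by omega) hB)

/-- "Filling out" a single heavy submatrix: there is an absolute constant `c > 0` such that
for all sufficiently large `n`, given `λ > 0` and integers `L, R` with
`(log n)/20 < L < L² < R < (n - 5L² - 3L)/9`, setting `n' = n - 8R - 5L² - 3L` and
`λ' = λ/2^(R-L)`: conditionally on any symmetric `±1` outcome of `M_{n'}` having a subset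
`B` of size `n' - R` with `M_{n'}[{R+1,…,n'}, B]` being `λ`-heavy, with probability at
least `1 - (1/8)·n^(-c)` over the random extension to size `n` there is a set `B'` of size
`n - L` containing `{1,…,n-3L}` such that `M_n[{L+1,…,n}, B']` is `λ'`-heavy. -/
theorem grow_single_minor_end :
    ∃ c : ℝ, 0 < c ∧ ∃ n₀ : ℕ, ∀ n : ℕ, n₀ ≤ n → ∀ lam : ℝ, 0 < lam →
      ∀ L R : ℕ, Real.log n / 20 < (L : ℝ) → L < L ^ 2 → L ^ 2 < R →
        (R : ℝ) < ((n : ℝ) - 5 * L ^ 2 - 3 * L) / 9 →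
        ∀ M : Matrix (Fin (n - 8 * R - 5 * L ^ 2 - 3 * L))
            (Fin (n - 8 * R - 5 * L ^ 2 - 3 * L)) ℝ,
          M.IsSymm → (∀ i j, M i j = 1 ∨ M i j = -1) →
          (∃ B : Finset (Fin (n - 8 * R - 5 * L ^ 2 - 3 * L)),
            B.card = n - 8 * R - 5 * L ^ 2 - 3 * L - R ∧
            lam ≤ |permOn M
              (univ.filter fun i : Fin (n - 8 * R - 5 * L ^ 2 - 3 * L) => R ≤ (i : ℕ))
              B|) →
          1 - (1 / 8) * (n : ℝ) ^ (-c) ≤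
            probExt n M fun Mn => ∃ B' : Finset (Fin n),
              B'.card = n - L ∧ (∀ i : Fin n, (i : ℕ) < n - 3 * L → i ∈ B') ∧
              lam / 2 ^ (R - L) ≤
                |permOn Mn (univ.filter fun i : Fin n => L ≤ (i : ℕ)) B'| := by
  obtain ⟨c, hc, n₀, h⟩ := grow_single_minor_end_general
  exact ⟨c, hc, n₀, fun n hn lam _ L R hlog _ hLR hR M _ _ => h n hn lam L R hlog hLR hR M⟩
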